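/- arXiv:1910.07469 — 2 statements merged into one kernel-verified Lean document; each statement's English description precedes it below -/
import Mathlib

section
/- Let f be a continuous 2π-periodic piecewise C¹ function with ⟨f,f⟩ > 0 and ⟨f',f'⟩ > 0, and let ρ be its limit covariance function. Then ρ''(t) − ρ''(0) > 0 for every t > 0; in particular, for every 0 < δ ≤ T, inf_{δ ≤ t ≤ T} (ρ''(t) − ρ''(0)) > 0. -/
open MeasureTheory Filter Set

noncomputable section

/-- Scalar product `⟨g,h⟩ := (1/2π)∫₀^{2π} g(t)h(t) dt`. -/
def iprod (g h : ℝ → ℝ) : ℝ :=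
  (1 / (2 * Real.pi)) * ∫ t in (0:ℝ)..(2 * Real.pi), g t * h t

/-- Convolution `(g∗h)(x) := (1/2π)∫₀^{2π} g(u)h(x−u) du`. -/
def conv (g h : ℝ → ℝ) (x : ℝ) : ℝ :=
  (1 / (2 * Real.pi)) * ∫ u in (0:ℝ)..(2 * Real.pi), g u * h (x - u)

/-- `f̌(x) := f(−x)`. -/
def checkFn (f : ℝ → ℝ) : ℝ → ℝ := fun x => f (-x)

/-- Limit covariance function: `ρ(u) := (1/u)∫₀^u (f∗f̌)(x) dx` for `u ≠ 0`,
`ρ(0) := ⟨f,f⟩`. -/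
def rho (f : ℝ → ℝ) (u : ℝ) : ℝ :=
  if u = 0 then iprod f f else (1 / u) * ∫ x in (0:ℝ)..u, conv f (checkFn f) x

/-- A continuous `2π`-periodic function which is piecewise `C¹` with a.e. derivative `f'`. -/
def IsPiecewiseC1 (f f' : ℝ → ℝ) : Prop :=
  Continuous f ∧ Function.Periodic f (2 * Real.pi) ∧
  ∃ S : Finset ℝ,
    (∀ x : ℝ, (∀ s ∈ S, ∀ k : ℤ, x ≠ s + 2 * Real.pi * k) → HasDerivAt f (f' x) x) ∧
    (∀ s ∈ S, (∃ L : ℝ, Tendsto f' (nhdsWithin s (Set.Iio s)) (nhds L)) ∧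
              (∃ R : ℝ, Tendsto f' (nhdsWithin s (Set.Ioi s)) (nhds R)))

structure L2P (g : ℝ → ℝ) : Prop where
  meas : Measurable g
  per : Function.Periodic g (2 * Real.pi)
  int : ∀ a b : ℝ, IntervalIntegrable (fun u => g u ^ 2) volume a b

lemma L2P.shift {g : ℝ → ℝ} (hg : L2P g) (y : ℝ) : L2P (fun u => g (u + y)) where
  meas := hg.meas.comp (measurable_id.add_const y)
  per := fun x => by
    have := hg.per (x + y)
    simpa [add_right_comm] using this
  int := fun a b => by
    have := (hg.int (a + y) (b + y)).comp_add_right y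
    simpa using this

lemma L2P.abs {g : ℝ → ℝ} (hg : L2P g) : L2P (fun u => |g u|) where
  meas := hg.meas.abs
  per := fun x => by
    have := hg.per x
    simp [this]
  int := fun a b => by
    simpa using hg.int a b

lemma L2P.of_cont {f : ℝ → ℝ} (hf : Continuous f) (hp : Function.Periodic f (2 * Real.pi)) :
    L2P f where
  meas := hf.measurable
  per := hp
  int := fun a b => (hf.pow 2).intervalIntegrable a b

lemma L2P.mulInt {h g : ℝ → ℝ} (hh : L2P h) (hg : L2P g) (a b : ℝ) :
    IntervalIntegrable (fun u => h u * g u) volume a b := by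
  refine ((hh.int a b).add (hg.int a b)).mono_fun
    (hh.meas.mul hg.meas).aestronglyMeasurable (Eventually.of_forall fun u => ?_)
  simp only [Real.norm_eq_abs]
  rw [abs_of_nonneg (by positivity : 0 ≤ h u ^ 2 + g u ^ 2), abs_mul]
  nlinarith [sq_nonneg (|h u| - |g u|), sq_abs (h u), sq_abs (g u), abs_nonneg (h u), abs_nonneg (g u)]

lemma L2P.one : L2P (fun _ => (1:ℝ)) := L2P.of_cont continuous_const (fun _ => rfl)

lemma L2P.int1 {g : ℝ → ℝ} (hg : L2P g) (a b : ℝ) :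
    IntervalIntegrable g volume a b := by
  simpa using L2P.mulInt L2P.one hg a b

lemma L2P.memLp {g : ℝ → ℝ} (hg : L2P g) (a b : ℝ) (hab : a ≤ b) :
    MemLp ((Ioc a b).indicator g) 2 volume := by
  rw [memLp_indicator_iff_restrict measurableSet_Ioc,
    memLp_two_iff_integrable_sq hg.meas.aestronglyMeasurable]
  exact (intervalIntegrable_iff_integrableOn_Ioc_of_le hab).1 (hg.int a b)

/-- Correlation integral. -/
def corr (h g : ℝ → ℝ) (y : ℝ) : ℝ := ∫ u in (0:ℝ)..(2 * Real.pi), h u * g (u + y)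

lemma corr_cont {h g : ℝ → ℝ} (hh : L2P h) (hg : L2P g) : Continuous (corr h g) := by
  rw [continuous_iff_continuousAt]
  intro y0
  have h2pi := Real.two_pi_pos
  set R : ℝ := |y0| + 1 + 2 * Real.pi with hR
  have hRpos : 0 < R := by positivity
  have m1 := hh.memLp 0 (2 * Real.pi) h2pi.le
  have m2 := hg.memLp (-R) R (by linarith)
  have : Fact ((2:ENNReal) ≠ ⊤) := ⟨by simp⟩
  let F : ℝ → ℝ := fun y => inner ℝ (m1.toLp) ((DomAddAct.mk y) +ᵥ m2.toLp)
  have hF : Continuous F := by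
    refine continuous_const.inner ?_
    exact Continuous.vadd (DomAddAct.continuous_mk) continuous_const
  refine hF.continuousAt.congr ?_
  have : ∀ᶠ y in nhds y0, |y - y0| < 1 := by
    have := Metric.ball_mem_nhds y0 one_pos
    filter_upwards [this] with y hy
    simpa [Real.dist_eq] using hy
  filter_upwards [this] with y hy
  simp only [F]
  rw [DomAddAct.mk_vadd_toLp, L2.inner_def, corr, intervalIntegral.integral_of_le h2pi.le,
    ← integral_indicator measurableSet_Ioc]
  refine integral_congr_ae ?_
  filter_upwards [m1.coeFn_toLp, (MemLp.coeFn_toLp (m2.comp_measurePreserving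
    (measurePreserving_vadd y volume)))] with u h1 h2
  have h2' := h2
  simp only [Function.comp_def] at h2'
  rw [h1, h2']
  simp only [vadd_eq_add]
  by_cases hu : u ∈ Ioc 0 (2 * Real.pi)
  · have : y + u ∈ Ioc (-R) R := by
      have := abs_lt.1 hy
      have h3 := abs_le.1 (le_refl |y0|)
      constructor <;> linarith [hu.1, hu.2, this.1, this.2, h3.1, h3.2]
    rw [indicator_of_mem hu, indicator_of_mem hu, indicator_of_mem this, add_comm y u]
    simp [mul_comm]
  · simp [hu]

lemma L2P.shift_integral {k : ℝ → ℝ} (hk : Function.Periodic k (2 * Real.pi)) (y : ℝ) :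
    ∫ u in (0:ℝ)..(2 * Real.pi), k (u + y) = ∫ u in (0:ℝ)..(2 * Real.pi), k u := by
  rw [intervalIntegral.integral_comp_add_right]
  have := hk.intervalIntegral_add_eq y 0
  simpa [add_comm] using this

lemma corr_neg {h g : ℝ → ℝ} (hh : L2P h) (hg : L2P g) (y : ℝ) :
    corr h g (-y) = corr g h y := by
  unfold corr
  have hk : Function.Periodic (fun u => h u * g (u + -y)) (2 * Real.pi) := by
    intro x
    have := (hg.shift (-y)).per x
    simp only [this, hh.per x]
  rw [← L2P.shift_integral hk y]
  simp [mul_comm]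

lemma corr_per {h g : ℝ → ℝ} (hg : L2P g) (y : ℝ) :
    corr h g (y + 2 * Real.pi) = corr h g y := by
  unfold corr
  simp only [← add_assoc, hg.per _]

lemma corr_ftc {h f g : ℝ → ℝ} (hh : L2P h) (hf : L2P f) (hg : L2P g)
    (hfg : ∀ a b, ∫ u in a..b, g u = f b - f a) (x : ℝ) :
    corr h f x = corr h f 0 + ∫ y in (0:ℝ)..x, corr h g y := by
  have key : ∫ y in (0:ℝ)..x, corr h g y
      = ∫ u in (0:ℝ)..(2 * Real.pi), ∫ y in (0:ℝ)..x, h u * g (u + y) := by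
    unfold corr
    refine intervalIntegral_intervalIntegral_swap ?_
    have hm : Measurable (Function.uncurry fun y u : ℝ => h u * g (u + y)) :=
      (hh.meas.comp measurable_snd).mul (hg.meas.comp (measurable_snd.add measurable_fst))
    have hpi := Real.two_pi_pos
    rw [IntegrableOn, Measure.volume_eq_prod, ← Measure.prod_restrict,
      integrable_prod_iff hm.aestronglyMeasurable]
    constructor
    · refine Eventually.of_forall fun y => ?_
      exact intervalIntegrable_iff.1 (hh.mulInt (hg.shift y) 0 (2 * Real.pi))
    · have := (corr_cont hh.abs hg.abs).intervalIntegrable (μ := volume) 0 x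
      have h2 := intervalIntegrable_iff.1 this
      refine h2.congr (Eventually.of_forall fun y => ?_)
      simp only [corr, intervalIntegral.integral_of_le hpi.le, uIoc_of_le hpi.le]
      simp [Function.uncurry]
  rw [key]
  have : ∀ u, ∫ y in (0:ℝ)..x, h u * g (u + y) = h u * f (u + x) - h u * f (u + 0) := by
    intro u
    rw [intervalIntegral.integral_const_mul, intervalIntegral.integral_comp_add_left g u, hfg]
    ring
  simp_rw [this]
  rw [intervalIntegral.integral_sub (hh.mulInt (hf.shift x) _ _) (hh.mulInt (hf.shift 0) _ _)]
  unfold corr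
  ring

lemma corr_deriv {h f g : ℝ → ℝ} (hh : L2P h) (hf : L2P f) (hg : L2P g)
    (hfg : ∀ a b, ∫ u in a..b, g u = f b - f a) (x : ℝ) :
    HasDerivAt (corr h f) (corr h g x) x := by
  have e : corr h f = fun x => corr h f 0 + ∫ y in (0:ℝ)..x, corr h g y :=
    funext (corr_ftc hh hf hg hfg)
  rw [e]
  exact ((corr_cont hh hg).integral_hasStrictDerivAt 0 x).hasDerivAt.const_add _

/-- Weighted scaling integral. -/
lemma scale_deriv {w φ ψ : ℝ → ℝ} (hw : Continuous w) (hφ : ∀ x, HasDerivAt φ (ψ x) x)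
    (hψ : Continuous ψ) (x : ℝ) :
    HasDerivAt (fun x => ∫ s in (0:ℝ)..1, w s * φ (s * x))
      (∫ s in (0:ℝ)..1, (w s * s) * ψ (s * x)) x := by
  have hφc : Continuous φ := continuous_iff_continuousAt.2 fun x => (hφ x).continuousAt
  have hc : Continuous (fun p : ℝ × ℝ => (w p.2 * p.2) * ψ (p.2 * p.1)) := by fun_prop
  obtain ⟨C, hC⟩ := ((isCompact_closedBall x 1).prod (isCompact_Icc (a := (0:ℝ)) (b := 1))).exists_bound_of_continuousOn
    hc.continuousOn
  refine (intervalIntegral.hasDerivAt_integral_of_dominated_loc_of_deriv_le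
    (F := fun x s => w s * φ (s * x)) (F' := fun x s => (w s * s) * ψ (s * x)) (bound := fun _ => C)
    (Metric.closedBall_mem_nhds x one_pos) ?_ ?_ ?_ ?_ ?_ ?_).2
  · exact Eventually.of_forall fun y => (by fun_prop : Continuous fun s => w s * φ (s * y)).aestronglyMeasurable
  · exact (by fun_prop : Continuous fun s => w s * φ (s * x)).intervalIntegrable _ _
  · exact (by fun_prop : Continuous fun s => (w s * s) * ψ (s * x)).aestronglyMeasurable
  · refine Eventually.of_forall fun s hs y hy => ?_
    rw [uIoc_of_le zero_le_one] at hs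
    exact hC (y, s) ⟨hy, hs.1.le, hs.2⟩
  · exact intervalIntegrable_const
  · refine Eventually.of_forall fun s hs y hy => ?_
    have h1 : HasDerivAt (fun y => s * y) s y := by simpa using (hasDerivAt_id y).const_mul s
    have := ((hφ (s * y)).comp y h1).const_mul (w s)
    rw [mul_assoc, mul_comm s]
    exact this

lemma corr_dist {g : ℝ → ℝ} (hg : L2P g) (a b : ℝ) :
    ∫ u in (0:ℝ)..(2 * Real.pi), (g (u + a) - g (u + b)) ^ 2
      = 2 * (corr g g 0 - corr g g (b - a)) := by
  have i1 := (hg.shift a).int 0 (2 * Real.pi)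
  have i2 := (hg.shift b).int 0 (2 * Real.pi)
  have i3 := (hg.shift a).mulInt (hg.shift b) 0 (2 * Real.pi)
  have e : ∀ u, (g (u + a) - g (u + b)) ^ 2
      = g (u + a) ^ 2 + g (u + b) ^ 2 - 2 * (g (u + a) * g (u + b)) := fun u => by ring
  simp_rw [e]
  rw [intervalIntegral.integral_sub (i1.add i2) (i3.const_mul 2),
    intervalIntegral.integral_add i1 i2, intervalIntegral.integral_const_mul]
  have p1 : Function.Periodic (fun u => g u ^ 2) (2 * Real.pi) := fun x => by
    simp only [hg.per x]
  have p2 : Function.Periodic (fun u => g u * g (u + (b - a))) (2 * Real.pi) := fun x => by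
    have := (hg.shift (b - a)).per x
    simp only [this, hg.per x]
  have s1 := L2P.shift_integral p1 a
  have s2 := L2P.shift_integral p1 b
  have s3 := L2P.shift_integral p2 a
  simp only [add_assoc, add_sub_cancel] at s3
  rw [s1, s2, s3]
  unfold corr
  simp only [add_zero, sq]
  ring

lemma corr_le {g : ℝ → ℝ} (hg : L2P g) (x : ℝ) : corr g g x ≤ corr g g 0 := by
  have := corr_dist hg 0 x
  have h2 : 0 ≤ ∫ u in (0:ℝ)..(2 * Real.pi), (g (u + 0) - g (u + x)) ^ 2 :=
    intervalIntegral.integral_nonneg Real.two_pi_pos.le fun u _ => sq_nonneg _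
  rw [this, sub_zero] at h2
  linarith

lemma L2P.sub {g h : ℝ → ℝ} (hg : L2P g) (hh : L2P h) : L2P (fun u => g u - h u) where
  meas := hg.meas.sub hh.meas
  per := fun x => by simp only [hg.per x, hh.per x]
  int := fun a b => by
    have := ((hg.int a b).add (hh.int a b)).sub ((hg.mulInt hh a b).const_mul 2)
    convert this using 2
    ring

lemma corr_double {g : ℝ → ℝ} (hg : L2P g) (x : ℝ) :
    corr g g 0 - corr g g (2 * x) ≤ 4 * (corr g g 0 - corr g g x) := by
  have e1 := corr_dist hg 0 (2 * x)
  have e2 := corr_dist hg 0 x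
  have e3 := corr_dist hg x (2 * x)
  have j : ∀ a b, IntervalIntegrable (fun u => (g (u + a) - g (u + b)) ^ 2) volume 0 (2 * Real.pi) :=
    fun a b => ((hg.shift a).sub (hg.shift b)).int _ _
  have := intervalIntegral.integral_mono_on (Real.two_pi_pos.le) (j 0 (2 * x))
    (((j 0 x).const_mul 2).add ((j x (2 * x)).const_mul 2))
    (fun u _ => by
      nlinarith [sq_nonneg ((g (u + 0) - g (u + x)) - (g (u + x) - g (u + 2 * x)))])
  rw [intervalIntegral.integral_add ((j 0 x).const_mul 2) ((j x (2 * x)).const_mul 2),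
    intervalIntegral.integral_const_mul, intervalIntegral.integral_const_mul, e1, e2, e3] at this
  have h1 : 2 * x - x = x := by ring
  rw [h1, sub_zero, sub_zero] at this
  linarith

lemma exists_corr_lt {f g : ℝ → ℝ} (hF : L2P f) (hG : L2P g)
    (hfg : ∀ a b, ∫ u in a..b, g u = f b - f a) (hpos : 0 < corr g g 0) (t : ℝ) (ht : 0 < t) :
    ∃ s ∈ Icc (0:ℝ) 1, corr g g (s * t) < corr g g 0 := by
  by_contra! hcon
  have h0 : ∀ n : ℕ, ∀ s ∈ Icc (0:ℝ) 1, corr g g (2 ^ n * (s * t)) = corr g g 0 := by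
    intro n
    induction n with
    | zero => intro s hs; simpa using le_antisymm (corr_le hG _) (hcon s hs)
    | succ n ih =>
      intro s hs
      have := corr_double hG (2 ^ n * (s * t))
      rw [ih s hs, ← mul_assoc, ← pow_succ'] at this
      linarith [corr_le hG (2 ^ (n + 1) * (s * t))]
  have hall : ∀ x : ℝ, 0 ≤ x → corr g g x = corr g g 0 := by
    intro x hx
    obtain ⟨n, hn⟩ := pow_unbounded_of_one_lt (x / t) (one_lt_two)
    have h2 : (0:ℝ) < 2 ^ n := by positivity
    rw [div_lt_iff₀ ht] at hn
    have := h0 n (x / (2 ^ n * t)) ⟨by positivity, by rw [div_le_one (by positivity)]; exact hn.le⟩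
    rw [← this]
    congr 1
    field_simp
  have h1 := corr_ftc hG hF hG hfg (2 * Real.pi)
  have h2 := corr_per (h := g) hF 0
  rw [zero_add] at h2
  have h3 : ∫ y in (0:ℝ)..(2 * Real.pi), corr g g y = ∫ y in (0:ℝ)..(2 * Real.pi), corr g g 0 := by
    refine intervalIntegral.integral_congr fun y hy => ?_
    rw [uIcc_of_le Real.two_pi_pos.le] at hy
    exact hall y hy.1
  rw [h3, h2, intervalIntegral.integral_const] at h1
  have : 0 < (2 * Real.pi - 0) • corr g g 0 := by
    rw [smul_eq_mul, sub_zero]; exact mul_pos Real.two_pi_pos hpos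
  linarith

lemma rho_eq {f : ℝ → ℝ} (hF : L2P f) :
    rho f = fun x => ∫ s in (0:ℝ)..1, (1 / (2 * Real.pi)) * corr f f (s * x) := by
  have hconv : ∀ x, conv f (checkFn f) x = (1 / (2 * Real.pi)) * corr f f x := by
    intro x
    rw [← corr_neg hF hF x]
    unfold conv checkFn corr
    congr 1
    refine intervalIntegral.integral_congr fun u _ => ?_
    have : -(x - u) = u + -x := by ring
    simp only [this]
  funext x
  unfold rho
  split_ifs with hx
  · subst hx
    simp [iprod, corr]
  · simp_rw [hconv]
    rw [intervalIntegral.integral_comp_mul_right (fun y => (1 / (2 * Real.pi)) * corr f f y) hx]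
    simp

lemma main_aux {f g : ℝ → ℝ} (hF : L2P f) (hG : L2P g)
    (hfg : ∀ a b, ∫ u in a..b, g u = f b - f a) (hpos : 0 < corr g g 0) :
    Continuous (fun t => deriv (deriv (rho f)) t - deriv (deriv (rho f)) 0) ∧
    ∀ t : ℝ, 0 < t → 0 < deriv (deriv (rho f)) t - deriv (deriv (rho f)) 0 := by
  have hpi := Real.two_pi_pos
  have d1 : ∀ x, HasDerivAt (corr f f) (corr f g x) x := corr_deriv hF hF hG hfg
  have d2 : ∀ x, HasDerivAt (corr f g) (-corr g g x) x := by
    intro x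
    have e : corr f g = fun x => corr g f (-x) := funext fun x => (corr_neg hG hF x).symm
    rw [e, ← corr_neg hG hG x]
    have := (corr_deriv hG hF hG hfg (-x)).comp x (hasDerivAt_neg x)
    simpa [Function.comp_def] using this
  have c1 := corr_cont hF hG
  have c2 := corr_cont hG hG
  have r1 : deriv (rho f) = fun x => ∫ s in (0:ℝ)..1, ((1 / (2 * Real.pi)) * s) * corr f g (s * x) := by
    rw [rho_eq hF]
    funext x
    exact (scale_deriv (w := fun _ => 1 / (2 * Real.pi)) continuous_const d1 c1 x).deriv
  have r2 : deriv (deriv (rho f)) = fun x => ∫ s in (0:ℝ)..1,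
      ((1 / (2 * Real.pi)) * s * s) * (-corr g g (s * x)) := by
    rw [r1]
    funext x
    exact (scale_deriv (w := fun s => 1 / (2 * Real.pi) * s) (by fun_prop) d2 c2.neg x).deriv
  rw [r2]
  constructor
  · refine Continuous.sub ?_ continuous_const
    refine intervalIntegral.continuous_parametric_intervalIntegral_of_continuous' ?_ 0 1
    unfold Function.uncurry
    fun_prop
  · intro t ht
    have hcont : ∀ x, Continuous fun s : ℝ => ((1 / (2 * Real.pi)) * s * s) * (-corr g g (s * x)) := by
      intro x
      fun_prop
    simp only
    rw [← intervalIntegral.integral_sub ((hcont t).intervalIntegrable _ _)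
      ((hcont 0).intervalIntegrable _ _)]
    obtain ⟨s, hs, hlt⟩ := exists_corr_lt hF hG hfg hpos t ht
    have key : ∀ s, ((1 / (2 * Real.pi)) * s * s) * (-corr g g (s * t))
      - ((1 / (2 * Real.pi)) * s * s) * (-corr g g (s * 0))
      = ((1 / (2 * Real.pi)) * s ^ 2) * (corr g g 0 - corr g g (s * t)) := by
      intro s
      rw [mul_zero]; ring
    refine intervalIntegral.integral_pos zero_lt_one
      ((hcont t).sub (hcont 0)).continuousOn (fun s _ => ?_) ⟨s, hs, ?_⟩
    · rw [key]
      exact mul_nonneg (by positivity) (sub_nonneg.2 (corr_le hG _))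
    · rw [key]
      have hs0 : s ≠ 0 := by
        rintro rfl
        simp at hlt
      exact mul_pos (by positivity) (sub_pos.2 hlt)

theorem statement7 (f f' : ℝ → ℝ) (hf : IsPiecewiseC1 f f')
    (hff : 0 < iprod f f) (hff' : 0 < iprod f' f') :
    (∀ t : ℝ, 0 < t →
      0 < deriv (deriv (rho f)) t - deriv (deriv (rho f)) 0) ∧
    (∀ δ T : ℝ, 0 < δ → δ ≤ T →
      0 < sInf ((fun t => deriv (deriv (rho f)) t - deriv (deriv (rho f)) 0) ''
        Set.Icc δ T)) := by
  obtain ⟨hfc, hper, S, hS, -⟩ := hf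
  have hpi := Real.two_pi_pos
  have hB : Set.Countable (⋃ s ∈ S, Set.range fun k : ℤ => s + 2 * Real.pi * k) :=
    S.countable_toSet.biUnion fun s _ => Set.countable_range _
  set B := (⋃ s ∈ S, Set.range fun k : ℤ => s + 2 * Real.pi * k) with hBdef
  have hd : ∀ x ∉ B, HasDerivAt f (f' x) x := by
    intro x hx
    refine hS x fun s hs k hk => hx ?_
    simp only [hBdef, mem_iUnion, mem_range]
    exact ⟨s, hs, k, hk.symm⟩
  set g := deriv f with hg
  have hd' : ∀ x ∉ B, HasDerivAt f (g x) x := fun x hx => (hd x hx).differentiableAt.hasDerivAt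
  have hae : ∀ᵐ x, f' x = g x := by
    have : ∀ᵐ x, x ∉ B := by
      have := hB.measure_zero volume
      exact measure_eq_zero_iff_ae_notMem.1 this
    filter_upwards [this] with x hx
    exact (hd x hx).deriv.symm
  have hint : 0 < ∫ t in (0:ℝ)..(2 * Real.pi), g t ^ 2 := by
    have e : iprod f' f' = (1 / (2 * Real.pi)) * ∫ t in (0:ℝ)..(2 * Real.pi), g t ^ 2 := by
      unfold iprod
      congr 1
      refine intervalIntegral.integral_congr_ae ?_
      filter_upwards [hae] with x hx _
      rw [hx, sq]
    rw [e] at hff'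
    exact (mul_pos_iff_of_pos_left (by positivity)).1 hff'
  have hgper : Function.Periodic g (2 * Real.pi) := by
    intro x
    rw [hg, ← deriv_comp_add_const]
    congr 1
    exact funext hper
  have hG : L2P g := by
    refine ⟨measurable_deriv f, hgper, ?_⟩
    refine Function.Periodic.intervalIntegrable₀ (T := 2 * Real.pi) (fun x => ?_) hpi.ne' ?_
    · simp only [hgper x]
    · by_contra hcon
      rw [intervalIntegral.integral_undef hcon] at hint
      exact lt_irrefl _ hint
  have hF : L2P f := L2P.of_cont hfc hper
  have hfg : ∀ a b, ∫ u in a..b, g u = f b - f a := fun a b =>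
    integral_eq_of_hasDerivAt_off_countable f g hB hfc.continuousOn
      (fun x hx => hd' x hx.2) (hG.int1 a b)
  have hint' : 0 < corr g g 0 := by
    simpa [corr, sq] using hint
  obtain ⟨hc, hpos⟩ := main_aux hF hG hfg hint'
  refine ⟨hpos, fun δ T hδ hT => ?_⟩
  have hmem := (isCompact_Icc.image hc).sInf_mem ((nonempty_Icc.2 hT).image
    (fun t => deriv (deriv (rho f)) t - deriv (deriv (rho f)) 0))
  obtain ⟨t, ht, hte⟩ := hmem
  rw [← hte]
  exact hpos t (hδ.trans_le ht.1)


end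
end

section
/- Let f be a continuous 2π-periodic piecewise C¹ function, and let ρ be its limit covariance function. Then ρ(0) = ⟨f,f⟩, ρ'(0) = 0, and ρ''(0) = −(1/3)⟨f',f'⟩. -/
open MeasureTheory Filter Set

noncomputable section

open scoped Topology

/-- The analytic part: R continuous, ρ = mean of R. -/
lemma key_calc (R ρ : ℝ → ℝ) (hR : Continuous R)
    (hρ : ∀ u, u ≠ 0 → ρ u = (1 / u) * ∫ x in (0:ℝ)..u, R x) (hev : ∀ x, R (-x) = R x) :
    deriv ρ 0 = 0 ∧
    (∀ a, Tendsto (fun u => (R 0 - R u) / u ^ 2) (𝓝[≠] 0) (𝓝 a) →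
      deriv (deriv ρ) 0 = - (2 / 3) * a) ∧
    (deriv (deriv ρ) 0 ≠ 0 → ∃ a, Tendsto (fun u => (R 0 - R u) / u ^ 2) (𝓝[≠] 0) (𝓝 a)) := by
  have hd0 : deriv ρ 0 = 0 := by
    have : (fun x => ρ (-x)) = ρ := by
      funext x
      by_cases hx : x = 0
      · simp [hx]
      · rw [hρ x hx, hρ (-x) (by simpa using hx)]
        have := intervalIntegral.integral_comp_neg (a := 0) (b := -x) R
        simp only [hev, neg_zero, neg_neg] at this
        rw [this, intervalIntegral.integral_symm]
        field_simp
    have h2 := deriv_comp_neg (f := ρ) (x := 0)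
    rw [this, neg_zero] at h2
    linarith
  set Φ : ℝ → ℝ := fun x => R 0 - R x with hΦ
  set Q : ℝ → ℝ := fun u => ∫ x in (0:ℝ)..u, Φ x with hQ
  have hΦc : Continuous Φ := by fun_prop
  have hQd : ∀ u, HasDerivAt Q (Φ u) u := fun u => hΦc.integral_hasStrictDerivAt 0 u |>.hasDerivAt
  have hQ0 : Q 0 = 0 := by simp [hQ]
  have hQt : Tendsto Q (𝓝[≠] 0) (𝓝 0) := by
    have := (hQd 0).continuousAt.tendsto
    rw [hQ0] at this
    exact this.mono_left nhdsWithin_le_nhds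
  have hρQ : ∀ u, u ≠ 0 → ρ u = R 0 - Q u / u := by
    intro u hu
    rw [hρ u hu]
    simp only [hQ, hΦ]
    rw [intervalIntegral.integral_sub (by simp) (hR.intervalIntegrable _ _)]
    simp
    field_simp
    ring
  have hQu : ∀ u, u ≠ 0 → HasDerivAt (fun u => Q u / u) ((Φ u * u - Q u) / u ^ 2) u := by
    intro u hu
    have h := (hQd u).div (hasDerivAt_id u) hu
    simp only [id, mul_one] at h
    exact h
  have hρd : ∀ u, u ≠ 0 → deriv ρ u = (Q u - Φ u * u) / u ^ 2 := by
    intro u hu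
    have h1 := (hQu u hu).const_sub (R 0)
    have h2 : HasDerivAt ρ (-((Φ u * u - Q u) / u ^ 2)) u := by
      refine h1.congr_of_eventuallyEq ?_
      filter_upwards [isOpen_ne.mem_nhds hu] with v hv using hρQ v hv
    rw [h2.deriv]; ring
  have hne : ∀ᶠ u : ℝ in 𝓝[≠] 0, u ≠ 0 := self_mem_nhdsWithin
  have hiff : ∀ c, HasDerivAt (deriv ρ) c 0 ↔
      Tendsto (fun u => Q u / u ^ 3 - Φ u / u ^ 2) (𝓝[≠] 0) (𝓝 c) := by
    intro c
    rw [hasDerivAt_iff_tendsto_slope_zero]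
    refine tendsto_congr' ?_
    filter_upwards [hne] with u hu
    simp only [zero_add, hd0, hρd u hu, smul_eq_mul]
    field_simp
    ring
  have hpow : ∀ n : ℕ, n ≠ 0 → Tendsto (fun u : ℝ => u ^ n) (𝓝[≠] 0) (𝓝 0) := by
    intro n hn
    have : Tendsto (fun u : ℝ => u ^ n) (𝓝 0) (𝓝 (0 ^ n)) := (continuous_pow n).tendsto 0
    rw [zero_pow hn] at this
    exact this.mono_left nhdsWithin_le_nhds
  refine ⟨hd0, ?_, ?_⟩
  · intro a ha
    have h3 : Tendsto (fun u => Q u / u ^ 3) (𝓝[≠] 0) (𝓝 (a / 3)) := by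
      refine HasDerivAt.lhopital_zero_nhdsNE (f' := Φ) (g' := fun u => 3 * u ^ 2)
        (Eventually.of_forall hQd) (Eventually.of_forall fun u => by simpa using hasDerivAt_pow 3 u)
        (by filter_upwards [hne] with u hu; positivity) hQt (hpow 3 (by norm_num)) ?_
      refine (ha.div_const 3).congr' ?_
      filter_upwards [hne] with u hu
      simp only [hΦ]
      field_simp
    rw [((hiff (a / 3 - a)).2 (h3.sub ha)).deriv]
    ring
  · intro hdd
    have hdiff : DifferentiableAt ℝ (deriv ρ) 0 := by
      by_contra h
      exact hdd (deriv_zero_of_not_differentiableAt h)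
    set c := deriv (deriv ρ) 0
    have hc := (hiff c).1 hdiff.hasDerivAt
    have hQut : Tendsto (fun u => Q u / u) (𝓝[≠] 0) (𝓝 0) := by
      have := hasDerivAt_iff_tendsto_slope_zero.1 (hQd 0)
      simp only [zero_add, hQ0, sub_zero, smul_eq_mul] at this
      have h00 : Φ 0 = 0 := by simp [hΦ]
      rw [h00] at this
      refine this.congr fun u => by rw [div_eq_inv_mul]
    have h3 : Tendsto (fun u => (Q u / u) / u ^ 2) (𝓝[≠] 0) (𝓝 (-c / 2)) := by
      refine HasDerivAt.lhopital_zero_nhdsNE (f' := fun u => (Φ u * u - Q u) / u ^ 2)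
        (g' := fun u => 2 * u)
        (by filter_upwards [hne] with u hu using hQu u hu)
        (Eventually.of_forall fun u => by simpa using hasDerivAt_pow 2 u)
        (by filter_upwards [hne] with u hu; positivity) hQut (hpow 2 (by norm_num)) ?_
      refine (hc.neg.div_const 2).congr' ?_
      filter_upwards [hne] with u hu
      field_simp
      ring
    refine ⟨-c / 2 - c, (h3.sub hc).congr' ?_⟩
    filter_upwards [hne] with u hu
    simp only [hΦ]
    field_simp
    ring

lemma sq_bound (f d : ℝ → ℝ) (hfc : Continuous f) (E : Set ℝ) (hE : E.Countable)
    (hd : ∀ x ∉ E, HasDerivAt f (d x) x) (hdm : Measurable d)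
    (hi : ∀ a b, IntervalIntegrable (fun t => d t ^ 2) volume a b) (t x : ℝ) :
    (f (t + x) - f t) ^ 2 ≤ x * ∫ s in t..(t + x), d s ^ 2 := by
  have hdi : ∀ a b, IntervalIntegrable d volume a b := by
    intro a b
    refine ((hi a b).add (intervalIntegrable_const (c := (1:ℝ)))).mono_fun
      hdm.aestronglyMeasurable (Eventually.of_forall fun s => ?_)
    simp only [Real.norm_eq_abs]
    rw [abs_of_nonneg (by positivity : 0 ≤ d s ^ 2 + 1), abs_le]
    constructor <;> nlinarith [sq_nonneg (d s - 1), sq_nonneg (d s + 1)]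
  have ftc : ∫ s in t..(t + x), d s = f (t + x) - f t :=
    MeasureTheory.integral_eq_of_hasDerivAt_off_countable f d hE hfc.continuousOn
      (fun y hy => hd y hy.2) (hdi _ _)
  rcases eq_or_ne x 0 with rfl | hx
  · simp
  set D := f (t + x) - f t with hD
  set m := D / x with hm
  have hexp : ∫ s in t..(t + x), (d s - m) ^ 2 = (∫ s in t..(t + x), d s ^ 2) - m ^ 2 * x := by
    have : ∀ s, (d s - m) ^ 2 = (d s ^ 2 - (2 * m) * d s) + m ^ 2 := fun s => by ring
    simp only [this]
    rw [intervalIntegral.integral_add ((hi _ _).sub ((hdi _ _).const_mul _)) (by simp),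
      intervalIntegral.integral_sub (hi _ _) ((hdi _ _).const_mul _),
      intervalIntegral.integral_const_mul, ftc]
    simp
    rw [hm]; field_simp; ring
  have hpos : 0 ≤ x * ∫ s in t..(t + x), (d s - m) ^ 2 := by
    rcases lt_or_gt_of_ne hx with h | h
    · rw [intervalIntegral.integral_symm]
      have := intervalIntegral.integral_nonneg (f := fun s => (d s - m) ^ 2) (μ := volume)
        (by linarith : t + x ≤ t) (fun u _ => by positivity)
      nlinarith
    · have := intervalIntegral.integral_nonneg (f := fun s => (d s - m) ^ 2) (μ := volume)
        (by linarith : t ≤ t + x) (fun u _ => by positivity)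
      positivity
  rw [hexp] at hpos
  have : D ^ 2 = x * (m ^ 2 * x) := by rw [hm]; field_simp
  rw [this]; linarith

lemma int_bound (f d : ℝ → ℝ) (T : ℝ) (hT : 0 < T) (hfc : Continuous f) (E : Set ℝ)
    (hE : E.Countable)
    (hd : ∀ x ∉ E, HasDerivAt f (d x) x) (hdm : Measurable d) (hdp : Function.Periodic d T)
    (hi : ∀ a b, IntervalIntegrable (fun t => d t ^ 2) volume a b) (x : ℝ) :
    ∫ t in (0:ℝ)..T, (f (t + x) - f t) ^ 2 ≤ x ^ 2 * ∫ s in (0:ℝ)..T, d s ^ 2 := by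
  set F : ℝ → ℝ := fun t => ∫ s in (0:ℝ)..t, d s ^ 2 with hF
  have hFc : Continuous F := intervalIntegral.continuous_primitive hi 0
  have hFi : ∀ a b, IntervalIntegrable F volume a b := fun a b => hFc.intervalIntegrable a b
  have hsub : ∀ a b, ∫ s in a..b, d s ^ 2 = F b - F a := fun a b =>
    (intervalIntegral.integral_interval_sub_left (hi _ _) (hi _ _)).symm
  have hper : ∀ t, F (t + T) = F t + F T := by
    intro t
    have hp2 : Function.Periodic (fun s => d s ^ 2) T := fun s => by simp [hdp s]
    have := hp2.intervalIntegral_add_eq t 0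
    rw [hsub, hsub, zero_add] at this
    have h0 : F 0 = 0 := by simp [hF]
    linarith
  have hI : ∫ t in (0:ℝ)..T, (F (t + x) - F t) = x * F T := by
    rw [intervalIntegral.integral_sub
      (Continuous.intervalIntegrable (u := fun t => F (t + x)) (by fun_prop) _ _) (hFi _ _),
      intervalIntegral.integral_comp_add_right]
    have e1 := intervalIntegral.integral_add_adjacent_intervals (hFi 0 x) (hFi x (T + x))
    have e2 := intervalIntegral.integral_add_adjacent_intervals (hFi 0 T) (hFi T (T + x))
    have e3 : ∫ t in T..(T + x), F t = (∫ t in (0:ℝ)..x, F t) + x * F T := by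
      have := intervalIntegral.integral_comp_add_right (a := 0) (b := x) F T
      rw [zero_add, add_comm x T] at this
      rw [← this]
      simp only [hper]
      rw [intervalIntegral.integral_add (hFi _ _) (by simp)]
      simp
    rw [zero_add]
    linarith
  calc ∫ t in (0:ℝ)..T, (f (t + x) - f t) ^ 2
      ≤ ∫ t in (0:ℝ)..T, x * (F (t + x) - F t) := by
        refine intervalIntegral.integral_mono_on hT.le
          (Continuous.intervalIntegrable (by fun_prop) _ _)
          (Continuous.intervalIntegrable (by fun_prop) _ _) fun t _ => ?_
        have := sq_bound f d hfc E hE hd hdm hi t x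
        rwa [hsub] at this
    _ = x ^ 2 * ∫ s in (0:ℝ)..T, d s ^ 2 := by
        rw [intervalIntegral.integral_const_mul, hI]
        simp only [hF]; ring

/-- Fatou. -/
lemma fatou_bound (f d : ℝ → ℝ) (T : ℝ) (hT : 0 < T) (hfc : Continuous f) (E : Set ℝ)
    (hE : E.Countable) (hd : ∀ x ∉ E, HasDerivAt f (d x) x) :
    ∫⁻ t in Ioc 0 T, ENNReal.ofReal (d t ^ 2) ≤
      liminf (fun x : ℝ => ENNReal.ofReal ((∫ t in (0:ℝ)..T, (f (t + x) - f t) ^ 2) / x ^ 2))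
        (𝓝[≠] 0) := by
  have h1 : ∀ x : ℝ, ENNReal.ofReal ((∫ t in (0:ℝ)..T, (f (t + x) - f t) ^ 2) / x ^ 2) =
      ∫⁻ t in Ioc 0 T, ENNReal.ofReal ((x⁻¹ * (f (t + x) - f t)) ^ 2) := by
    intro x
    rw [div_eq_inv_mul, ← intervalIntegral.integral_const_mul,
      intervalIntegral.integral_of_le hT.le, ofReal_integral_eq_lintegral_ofReal]
    · refine lintegral_congr fun t => ?_
      congr 1
      rw [mul_pow, inv_pow]
    · have : Continuous fun t => (x ^ 2)⁻¹ * (f (t + x) - f t) ^ 2 := by fun_prop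
      exact (this.intervalIntegrable 0 T).1
    · exact Eventually.of_forall fun t => by positivity
  simp only [h1]
  refine le_trans (le_of_eq ?_) (lintegral_liminf_le fun x => ?_)
  · refine lintegral_congr_ae (ae_restrict_of_ae ?_)
    filter_upwards [hE.ae_notMem volume] with t ht
    have := (hd t ht).tendsto_slope_zero
    simp only [smul_eq_mul] at this
    exact ((ENNReal.continuous_ofReal.tendsto _).comp (this.pow 2)).liminf_eq.symm
  · have : Continuous fun t => (x⁻¹ * (f (t + x) - f t)) ^ 2 := by fun_prop
    exact this.measurable.ennreal_ofReal

theorem statement9 (f f' : ℝ → ℝ) (hf : IsPiecewiseC1 f f') :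
    rho f 0 = iprod f f ∧
    deriv (rho f) 0 = 0 ∧
    deriv (deriv (rho f)) 0 = -(1 / 3) * iprod f' f' := by
  have hTpos : (0:ℝ) < 2 * Real.pi := by positivity
  obtain ⟨hfc, hfp, S, hS, -⟩ := hf
  set T : ℝ := 2 * Real.pi with hTdef
  -- the exceptional set
  set E : Set ℝ := ⋃ s ∈ S, range (fun k : ℤ => s + T * k) with hEdef
  have hE : E.Countable := S.countable_toSet.biUnion fun s _ => countable_range _
  have hS' : ∀ x ∉ E, HasDerivAt f (f' x) x := by
    intro x hx
    refine hS x fun s hs k hk => hx ?_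
    simp only [hEdef, mem_iUnion]
    exact ⟨s, hs, k, hk.symm⟩
  set d : ℝ → ℝ := deriv f with hddef
  have hd' : ∀ x ∉ E, d x = f' x := fun x hx => (hS' x hx).deriv
  have hd : ∀ x ∉ E, HasDerivAt f (d x) x := fun x hx => by rw [hd' x hx]; exact hS' x hx
  have hdm : Measurable d := measurable_deriv f
  have hdp : Function.Periodic d T := by
    intro x
    have h1 : (fun y => f (y + T)) = f := funext hfp
    have h2 := deriv_comp_add_const f T x
    rw [h1] at h2
    exact h2.symm
  have hip : iprod f' f' = (1 / T) * ∫ t in (0:ℝ)..T, d t ^ 2 := by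
    unfold iprod
    congr 1
    refine intervalIntegral.integral_congr_ae ?_
    filter_upwards [hE.ae_notMem volume] with t ht _
    rw [hd' t ht, sq]
  have hfi : ∀ g : ℝ → ℝ, Continuous g → ∀ a b, IntervalIntegrable g volume a b :=
    fun g hg a b => hg.intervalIntegrable a b
  -- correlation function
  set R : ℝ → ℝ := conv f (checkFn f) with hRdef
  have hR1 : ∀ x, R x = (1 / T) * ∫ u in (0:ℝ)..T, f u * f (u - x) := by
    intro x
    simp only [hRdef, conv, checkFn, neg_sub, hTdef]
  have hR2 : ∀ x, R x = (1 / T) * ∫ u in (0:ℝ)..T, f (u + x) * f u := by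
    intro x
    rw [hR1]
    congr 1
    have hp : Function.Periodic (fun u => f u * f (u - x)) T := fun u => by
      simp only [hfp u]
      rw [show u + T - x = (u - x) + T by ring, hfp]
    have e1 := hp.intervalIntegral_add_eq 0 x
    have e2 := intervalIntegral.integral_comp_add_right (a := 0) (b := T)
      (fun u => f u * f (u - x)) x
    simp only [add_sub_cancel_right, zero_add] at e1 e2
    rw [e1, e2, add_comm T x]
  have hRc : Continuous R := by
    have : R = fun x => (1 / T) * ∫ u in (0:ℝ)..T, f u * f (u - x) := funext hR1
    rw [this]
    refine continuous_const.mul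
      (intervalIntegral.continuous_parametric_intervalIntegral_of_continuous' ?_ _ _)
    simp only [Function.uncurry_def]
    fun_prop
  have hRev : ∀ x, R (-x) = R x := by
    intro x
    rw [hR2 x, hR1 (-x)]
    congr 1
    refine intervalIntegral.integral_congr fun u _ => ?_
    simp only [sub_neg_eq_add]
    ring
  have hΦ : ∀ x, R 0 - R x = (1 / (2 * T)) * ∫ t in (0:ℝ)..T, (f (t + x) - f t) ^ 2 := by
    intro x
    have hsq : ∫ t in (0:ℝ)..T, f (t + x) ^ 2 = ∫ t in (0:ℝ)..T, f t ^ 2 := by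
      have hp : Function.Periodic (fun u => f u ^ 2) T := fun u => by simp only [hfp u]
      have e1 := hp.intervalIntegral_add_eq 0 x
      have e2 := intervalIntegral.integral_comp_add_right (a := 0) (b := T)
        (fun u => f u ^ 2) x
      simp only [zero_add] at e1 e2
      rw [e1, e2, add_comm T x]
    have hexp : ∀ t, (f (t + x) - f t) ^ 2 = (f (t + x) ^ 2 + f t ^ 2) - 2 * (f (t + x) * f t) :=
      fun t => by ring
    simp only [hexp]
    rw [intervalIntegral.integral_sub (hfi _ (by fun_prop) _ _) (hfi _ (by fun_prop) _ _),
      intervalIntegral.integral_add (hfi _ (by fun_prop) _ _) (hfi _ (by fun_prop) _ _),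
      intervalIntegral.integral_const_mul, hsq, hR2 x, hR2 0]
    simp only [add_zero, ← sq]
    field_simp
    ring
  obtain ⟨k1, k2, k3⟩ := key_calc R (rho f) hRc
    (fun u hu => by simp only [rho, if_neg hu, hRdef]) hRev
  refine ⟨by simp [rho], k1, ?_⟩
  set G : ℝ → ℝ := fun x => (∫ t in (0:ℝ)..T, (f (t + x) - f t) ^ 2) / x ^ 2 with hG
  have hΦG : ∀ x, (R 0 - R x) / x ^ 2 = (1 / (2 * T)) * G x := by
    intro x
    rw [hΦ x, mul_div_assoc]
  have hfatou := fatou_bound f d T hTpos hfc E hE hd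
  set I : ℝ := ∫ t in (0:ℝ)..T, d t ^ 2 with hI
  have hdm2 : Measurable fun t => d t ^ 2 := hdm.pow_const 2
  by_cases hint : IntervalIntegrable (fun t => d t ^ 2) volume 0 T
  · have hp2 : Function.Periodic (fun s => d s ^ 2) T := fun s => by simp only [hdp s]
    have hi := hp2.intervalIntegrable₀ hTpos.ne' hint
    have hub : ∀ᶠ x in 𝓝[≠] (0:ℝ), G x ≤ I := by
      filter_upwards [self_mem_nhdsWithin] with x hx
      have hx2 : 0 < x ^ 2 := by
        have : x ≠ 0 := hx
        positivity
      simp only [hG]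
      rw [div_le_iff₀ hx2, mul_comm]
      exact int_bound f d T hTpos hfc E hE hd hdm hdp hi x
    have hI0 : 0 ≤ I := intervalIntegral.integral_nonneg hTpos.le fun t _ => by positivity
    have hlI : ∫⁻ t in Ioc 0 T, ENNReal.ofReal (d t ^ 2) = ENNReal.ofReal I := by
      rw [hI, intervalIntegral.integral_of_le hTpos.le, ofReal_integral_eq_lintegral_ofReal hint.1
        (Eventually.of_forall fun t => by positivity)]
    rw [hlI] at hfatou
    have hG0 : ∀ x, 0 ≤ G x := fun x =>
      div_nonneg (intervalIntegral.integral_nonneg hTpos.le fun t _ => by positivity) (by positivity)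
    have hGt : Tendsto G (𝓝[≠] 0) (𝓝 I) := by
      have ht : Tendsto (fun x => ENNReal.ofReal (G x)) (𝓝[≠] 0) (𝓝 (ENNReal.ofReal I)) := by
        refine tendsto_of_le_liminf_of_limsup_le hfatou ?_
        refine limsup_le_of_le (by isBoundedDefault) ?_
        filter_upwards [hub] with x hx using ENNReal.ofReal_le_ofReal hx
      have := (ENNReal.tendsto_toReal ENNReal.ofReal_ne_top).comp ht
      rw [ENNReal.toReal_ofReal hI0] at this
      refine this.congr fun x => ?_
      simp only [Function.comp_apply, ENNReal.toReal_ofReal (hG0 x)]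
    rw [k2 ((1 / (2 * T)) * I) ((hGt.const_mul _).congr fun x => (hΦG x).symm), hip]
    field_simp
  · have hz : I = 0 := intervalIntegral.integral_undef hint
    rw [hip, hz]
    simp only [mul_zero]
    by_contra hne
    obtain ⟨a, ha⟩ := k3 hne
    apply hint
    have hGt : Tendsto G (𝓝[≠] 0) (𝓝 (2 * T * a)) := by
      refine (ha.const_mul (2 * T)).congr fun x => ?_
      rw [hΦG]
      field_simp
    have ht := (ENNReal.continuous_ofReal.tendsto _).comp hGt
    have hfin : ∫⁻ t in Ioc 0 T, ENNReal.ofReal (d t ^ 2) < ⊤ :=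
      (hfatou.trans (le_of_eq ht.liminf_eq)).trans_lt ENNReal.ofReal_lt_top
    rw [intervalIntegrable_iff_integrableOn_Ioc_of_le hTpos.le]
    refine ⟨hdm2.aestronglyMeasurable, ?_⟩
    rw [hasFiniteIntegral_iff_ofReal (Eventually.of_forall fun t => by positivity)]
    exact hfin


end
end
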